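/- arXiv:2601.22845 — 3 statements merged into one kernel-verified Lean document; each statement's English description precedes it below -/
import Mathlib

section
/- Let N be a positive integer and let c, K > 0. Let M be an N×N real matrix such that ⟨Mξ, ξ⟩ ≥ c‖ξ‖² for every ξ ∈ ℝ^N (Euclidean inner product and norm), and such that |M i j| ≤ K/N whenever i ≠ j. Then M is invertible, every entry of M⁻¹ has absolute value at most 1/c, and there exists a constant C, depending only on c and K (in particular independent of N and of the indices), such that |(M⁻¹) i j| ≤ C/N whenever i ≠ j. -/
open scoped BigOperators

/-!
Let `D` be the diagonal part of `M` and `R = M - D`. Expanding `D = M - R` on both sides of `M⁻¹`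
gives `D M⁻¹ D = D - R + R M⁻¹ R`, whose off-diagonal entries read
`M i i * (M⁻¹) i j * M j j = -M i j + (R M⁻¹ R) i j`. Coercivity bounds the diagonal of `M` below
by `c` and the operator norm of `M⁻¹` above by `1 / c`. Since the rows and columns of `R` have
Euclidean norm at most `√N * (K / N)`, the quadratic term is at most `N * (K / N) ^ 2 / c`, which is
of the same order `1 / N` as `M i j`.
-/

open Matrix WithLp

open scoped InnerProductSpace Matrix.Norms.L2Operator

variable {𝕜 ι m n : Type*} [RCLike 𝕜] [Fintype ι] [Fintype m] [DecidableEq n]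

section OffDiagonal

/-- The off-diagonal part of a square matrix, with zeros on the diagonal: the remainder to be
bounded when comparing the matrix with its diagonal part. -/
def offDiagonal {R : Type*} [AddGroup R] (M : Matrix n n R) : Matrix n n R :=
  M - diagonal M.diag

theorem norm_offDiagonal_apply_le {E : Type*} [SeminormedAddCommGroup E] {M : Matrix n n E} {δ : ℝ}
    (hδ : 0 ≤ δ) (hM : ∀ i j, i ≠ j → ‖M i j‖ ≤ δ) (i j : n) : ‖offDiagonal M i j‖ ≤ δ := by
  rcases eq_or_ne i j with rfl | hij
  · simpa [offDiagonal] using hδ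
  · simpa [offDiagonal, hij] using hM i j hij

end OffDiagonal

variable [Fintype n]

section EuclideanNorm

theorem norm_dotProduct_le (u v : ι → 𝕜) : ‖u ⬝ᵥ v‖ ≤ ‖toLp 2 u‖ * ‖toLp 2 v‖ := by
  have norm_star : ‖toLp 2 (star u)‖ = ‖toLp 2 u‖ := by simp [EuclideanSpace.norm_eq]
  have cauchy_schwarz := norm_inner_le_norm (𝕜 := 𝕜) (toLp 2 (star u)) (toLp 2 v)
  rwa [EuclideanSpace.inner_toLp_toLp, star_star, dotProduct_comm, norm_star] at cauchy_schwarz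

theorem norm_dotProduct_mulVec_le (A : Matrix m n 𝕜) (u : m → 𝕜) (v : n → 𝕜) :
    ‖u ⬝ᵥ A *ᵥ v‖ ≤ ‖toLp 2 u‖ * ‖A‖ * ‖toLp 2 v‖ := calc
  ‖u ⬝ᵥ A *ᵥ v‖ ≤ ‖toLp 2 u‖ * ‖toLp 2 (A *ᵥ v)‖ := norm_dotProduct_le _ _
  _ ≤ ‖toLp 2 u‖ * (‖A‖ * ‖toLp 2 v‖) := by gcongr; exact A.l2_opNorm_mulVec (toLp 2 v)
  _ = ‖toLp 2 u‖ * ‖A‖ * ‖toLp 2 v‖ := (mul_assoc _ _ _).symm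

theorem norm_apply_le_l2_opNorm (A : Matrix m n 𝕜) (i : m) (j : n) : ‖A i j‖ ≤ ‖A‖ := by
  classical
  simpa using norm_dotProduct_mulVec_le A (Pi.single i 1) (Pi.single j 1)

theorem norm_toLp_two_le_sqrt_card_mul {E : Type*} [SeminormedAddCommGroup E] {v : ι → E} {δ : ℝ}
    (hδ : 0 ≤ δ) (hv : ∀ i, ‖v i‖ ≤ δ) : ‖toLp 2 v‖ ≤ √(Fintype.card ι) * δ := by
  rw [PiLp.norm_eq_of_L2, ← Real.sqrt_sq hδ, ← Real.sqrt_mul (Nat.cast_nonneg _), ← nsmul_eq_mul]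
  gcongr
  exact Finset.sum_le_card_nsmul _ _ _ fun i _ ↦ by gcongr; exact hv i

theorem norm_mul_mul_apply_le {l o : Type*} {B : Matrix l m 𝕜} {C : Matrix n o 𝕜} {β γ : ℝ}
    (hβ : 0 ≤ β) (hγ : 0 ≤ γ) (hB : ∀ i k, ‖B i k‖ ≤ β) (hC : ∀ k j, ‖C k j‖ ≤ γ)
    (A : Matrix m n 𝕜) (i : l) (j : o) :
    ‖(B * A * C) i j‖ ≤ √(Fintype.card m) * β * ‖A‖ * (√(Fintype.card n) * γ) := by
  have hentry : (B * A * C) i j = B i ⬝ᵥ A *ᵥ Cᵀ j := by rw [Matrix.mul_assoc]; rfl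
  rw [hentry]
  refine (norm_dotProduct_mulVec_le A (B i) (Cᵀ j)).trans ?_
  gcongr
  · exact norm_toLp_two_le_sqrt_card_mul hβ (hB i)
  · exact norm_toLp_two_le_sqrt_card_mul hγ fun k ↦ hC k j

end EuclideanNorm

section InverseEntries

theorem diagonal_mul_inv_mul_diagonal {R : Type*} [CommRing R] {M : Matrix n n R} (hM : IsUnit M) :
    diagonal M.diag * M⁻¹ * diagonal M.diag =
      diagonal M.diag - offDiagonal M + offDiagonal M * M⁻¹ * offDiagonal M := by
  have hdet : IsUnit M.det := (isUnit_iff_isUnit_det M).mp hM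
  have hdiag : diagonal M.diag = M - offDiagonal M := (sub_sub_cancel _ _).symm
  rw [hdiag]
  simp only [sub_mul, mul_sub, mul_nonsing_inv M hdet, one_mul,
    nonsing_inv_mul_cancel_right M _ hdet]
  abel

theorem diag_mul_inv_apply_mul_diag {R : Type*} [CommRing R] {M : Matrix n n R} (hM : IsUnit M)
    {i j : n} (hij : i ≠ j) :
    M i i * M⁻¹ i j * M j j = -M i j + (offDiagonal M * M⁻¹ * offDiagonal M) i j := by
  have hentry := congrFun₂ (diagonal_mul_inv_mul_diagonal hM) i j
  rw [mul_diagonal, diagonal_mul] at hentry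
  simpa [offDiagonal, hij] using hentry

theorem norm_inv_apply_le_of_ne {M : Matrix n n 𝕜} (hM : IsUnit M) {c δ : ℝ} (hc : 0 < c)
    (hdiag : ∀ i, c ≤ ‖M i i‖) (hoff : ∀ i j, i ≠ j → ‖M i j‖ ≤ δ) {i j : n} (hij : i ≠ j) :
    ‖M⁻¹ i j‖ ≤ (δ + Fintype.card n * δ ^ 2 * ‖M⁻¹‖) / c ^ 2 := by
  have hδ : 0 ≤ δ := (norm_nonneg _).trans (hoff i j hij)
  have hR := norm_offDiagonal_apply_le hδ hoff
  rw [le_div_iff₀ (by positivity)]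
  calc ‖M⁻¹ i j‖ * c ^ 2 = c * ‖M⁻¹ i j‖ * c := by ring
    _ ≤ ‖M i i‖ * ‖M⁻¹ i j‖ * ‖M j j‖ := by gcongr <;> exact hdiag _
    _ = ‖-M i j + (offDiagonal M * M⁻¹ * offDiagonal M) i j‖ := by
      rw [← diag_mul_inv_apply_mul_diag hM hij, norm_mul, norm_mul]
    _ ≤ ‖M i j‖ + ‖(offDiagonal M * M⁻¹ * offDiagonal M) i j‖ := by
      simpa only [norm_neg] using norm_add_le (-M i j) _
    _ ≤ δ + √(Fintype.card n) * δ * ‖M⁻¹‖ * (√(Fintype.card n) * δ) :=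
      add_le_add (hoff i j hij) (norm_mul_mul_apply_le hδ hδ hR hR _ i j)
    _ = δ + √(Fintype.card n) ^ 2 * δ ^ 2 * ‖M⁻¹‖ := by ring
    _ = δ + Fintype.card n * δ ^ 2 * ‖M⁻¹‖ := by rw [Real.sq_sqrt (Nat.cast_nonneg _)]

end InverseEntries

/-- Coercivity of a square matrix with constant `c`, in the form `c * ‖ξ‖² ≤ |⟪Mξ, ξ⟫|`. The
modulus takes the place of the real part, since only the modulus enters the inversion of `M`. -/
def IsCoerciveWith (c : ℝ) (M : Matrix n n 𝕜) : Prop :=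
  ∀ ξ : EuclideanSpace 𝕜 n, c * ‖ξ‖ ^ 2 ≤ ‖⟪toEuclideanCLM (𝕜 := 𝕜) M ξ, ξ⟫_𝕜‖

namespace IsCoerciveWith

theorem of_sum_mulVec_mul {c : ℝ} {M : Matrix n n ℝ}
    (hM : ∀ ξ : n → ℝ, c * ∑ i, ξ i ^ 2 ≤ ∑ i, (M *ᵥ ξ) i * ξ i) : IsCoerciveWith c M := by
  intro ξ
  rw [EuclideanSpace.real_norm_sq_eq, real_inner_comm, inner_toEuclideanCLM, dotProduct_comm]
  exact (hM ξ).trans (le_abs_self _)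

variable {c : ℝ} {M : Matrix n n 𝕜}

theorem isUnit (hM : IsCoerciveWith c M) (hc : 0 < c) : IsUnit M := by
  lift c to NNReal using hc.le
  rw [← MulEquiv.isUnit_map (toEuclideanCLM (n := n) (𝕜 := 𝕜))]
  refine ContinuousLinearMap.isUnit_of_forall_le_norm_inner_map _ (mod_cast hc) fun ξ ↦ ?_
  rw [mul_comm]
  exact hM ξ

theorem mul_norm_le (hM : IsCoerciveWith c M) (ξ : EuclideanSpace 𝕜 n) :
    c * ‖ξ‖ ≤ ‖toEuclideanCLM (𝕜 := 𝕜) M ξ‖ := by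
  rcases (norm_nonneg ξ).eq_or_lt with hξ | hξ
  · simp [← hξ]
  · refine le_of_mul_le_mul_right ?_ hξ
    rw [mul_assoc, ← sq]
    exact (hM ξ).trans (norm_inner_le_norm _ _)

theorem l2_opNorm_inv_le (hM : IsCoerciveWith c M) (hc : 0 < c) : ‖M⁻¹‖ ≤ 1 / c := by
  have hdet : IsUnit M.det := (isUnit_iff_isUnit_det M).mp (hM.isUnit hc)
  rw [← l2_opNorm_toEuclideanCLM]
  refine ContinuousLinearMap.opNorm_le_bound _ (by positivity) fun η ↦ ?_
  have hcancel : toEuclideanCLM (𝕜 := 𝕜) M (toEuclideanCLM (𝕜 := 𝕜) M⁻¹ η) = η := by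
    rw [← mul_apply_eq_comp, ← map_mul, mul_nonsing_inv M hdet, map_one,
      one_apply_eq_self]
  have hbound := hM.mul_norm_le (toEuclideanCLM (𝕜 := 𝕜) M⁻¹ η)
  rwa [hcancel, ← le_div_iff₀' hc, div_eq_inv_mul, ← one_div c] at hbound

theorem le_norm_apply_self (hM : IsCoerciveWith c M) (i : n) : c ≤ ‖M i i‖ := by
  simpa [EuclideanSpace.inner_single_right] using hM (EuclideanSpace.single i 1)

end IsCoerciveWith

theorem coercive_matrix_inverse_entry_bounds_general {c K : ℝ} (hc : 0 < c) {M : Matrix n n 𝕜}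
    (hM : IsCoerciveWith c M) (hoff : ∀ i j, i ≠ j → ‖M i j‖ ≤ K / Fintype.card n) :
    IsUnit M ∧ (∀ i j, ‖M⁻¹ i j‖ ≤ 1 / c) ∧
      ∀ i j, i ≠ j → ‖M⁻¹ i j‖ ≤ (K / c ^ 2 + K ^ 2 / c ^ 3) / Fintype.card n := by
  have hinv : ‖M⁻¹‖ ≤ 1 / c := hM.l2_opNorm_inv_le hc
  refine ⟨hM.isUnit hc, fun i j ↦ (norm_apply_le_l2_opNorm _ i j).trans hinv, fun i j hij ↦ ?_⟩
  have : Nonempty n := ⟨i⟩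
  calc ‖M⁻¹ i j‖
      ≤ (K / Fintype.card n + Fintype.card n * (K / Fintype.card n) ^ 2 * ‖M⁻¹‖) / c ^ 2 :=
        norm_inv_apply_le_of_ne (hM.isUnit hc) hc hM.le_norm_apply_self hoff hij
    _ ≤ (K / Fintype.card n + Fintype.card n * (K / Fintype.card n) ^ 2 * (1 / c)) / c ^ 2 := by
        gcongr
    _ = (K / c ^ 2 + K ^ 2 / c ^ 3) / Fintype.card n := by field_simp

/-- a coercive N×N matrix with O(1/N) off-diagonal entries is invertible,
the entries of its inverse are bounded by 1/c, and the off-diagonal entries of the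
inverse are bounded by C/N with C depending only on c and K. -/
theorem coercive_matrix_inverse_entry_bounds (c K : ℝ) (hc : 0 < c) (hK : 0 < K) :
    ∃ C : ℝ, ∀ (N : ℕ), 0 < N → ∀ M : Matrix (Fin N) (Fin N) ℝ,
      (∀ ξ : Fin N → ℝ, c * ∑ i, ξ i ^ 2 ≤ ∑ i, M.mulVec ξ i * ξ i) →
      (∀ i j, i ≠ j → |M i j| ≤ K / N) →
      IsUnit M ∧ (∀ i j, |M⁻¹ i j| ≤ 1 / c) ∧
        (∀ i j, i ≠ j → |M⁻¹ i j| ≤ C / N) := by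
  refine ⟨K / c ^ 2 + K ^ 2 / c ^ 3, fun N _ M hM hoff ↦ ?_⟩
  simpa only [Real.norm_eq_abs, Fintype.card_fin] using coercive_matrix_inverse_entry_bounds_general
    hc (.of_sum_mulVec_mul hM) (by simpa only [Real.norm_eq_abs, Fintype.card_fin] using hoff)
end

section
/- Let c, K > 0 and let s be a positive integer. There exists a constant C, depending only on c, K and s (in particular independent of N), with the following property. Let N be a positive integer and let M be an N×N real matrix with ⟨Mξ, ξ⟩ ≥ c‖ξ‖² for every ξ ∈ ℝ^N and |M i j| ≤ K/N for all i ≠ j. Let S ⊆ {1,…,N} be a nonempty subset with |S| ≤ s, let τ ≥ 0, and let y, t ∈ ℝ^N satisfy M y = t and |t i| ≤ τ · N^{1−|S∪{i}|} for every i ∈ {1,…,N}. Then |y i| ≤ C · τ · N^{1−|S∪{i}|} for every i ∈ {1,…,N}. -/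
open scoped BigOperators

/-!
Testing the equation with the solution and using Cauchy–Schwarz bounds the `ℓ¹` norm of `y` by
`N / c` times the sup norm of `M y`; reading the `i`-th row then turns this into a sup-norm bound
for `M⁻¹` that is uniform in `N`. The hypotheses pass to `Mᵀ`, so by duality `M⁻¹` is also bounded
on `ℓ¹`. Feeding the `ℓ¹` bound into the `i`-th row once more bounds `|y i|` by a multiple of
`|(M y) i|` plus the mean of `|M y|`. Any weight that dominates its own mean up to a constant is
therefore inherited by `y`, and `i ↦ N ^ (1 - |S ∪ {i}|)` is such a weight.
-/

open Matrix

/-- `M` is coercive with constant `c` for the Euclidean inner product: `c ‖ξ‖² ≤ ⟨M ξ, ξ⟩`. It is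
written out in coordinates because the norm on `ι → ℝ` is the sup norm. -/
def CoerciveWith {ι : Type*} [Fintype ι] (c : ℝ) (M : Matrix ι ι ℝ) : Prop :=
  ∀ ξ : ι → ℝ, c * ∑ i, ξ i ^ 2 ≤ ∑ i, (M *ᵥ ξ) i * ξ i

/-- The weight `ω^N_S = N ^ (1 - |S|)` of a set `S` of indices, where `N` is the number of all
indices. -/
noncomputable def indexWeight {ι : Type*} [Fintype ι] (S : Finset ι) : ℝ :=
  (Fintype.card ι : ℝ) ^ ((1 : ℤ) - (S.card : ℤ))

section IndexWeight

variable {ι : Type*} [Fintype ι]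

lemma indexWeight_nonneg (S : Finset ι) : 0 ≤ indexWeight S := by
  unfold indexWeight
  positivity

variable [DecidableEq ι]

lemma indexWeight_insert_of_notMem {S : Finset ι} {i : ι} (hi : i ∉ S) :
    indexWeight (insert i S) = indexWeight S / Fintype.card ι := by
  have hN : (Fintype.card ι : ℝ) ≠ 0 :=
    Nat.cast_ne_zero.mpr (Fintype.card_pos_iff.mpr ⟨i⟩).ne'
  rw [indexWeight, indexWeight, Finset.card_insert_of_notMem hi, div_eq_mul_inv,
    ← zpow_sub_one₀ hN, Nat.cast_succ, sub_sub]

lemma indexWeight_div_card_le_insert (S : Finset ι) (i : ι) :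
    indexWeight S / Fintype.card ι ≤ indexWeight (insert i S) := by
  by_cases hi : i ∈ S
  · rw [Finset.insert_eq_of_mem hi]
    exact div_le_self (indexWeight_nonneg S) (Nat.one_le_cast.mpr (Fintype.card_pos_iff.mpr ⟨i⟩))
  · exact (indexWeight_insert_of_notMem hi).ge

lemma sum_indexWeight_insert_le (S : Finset ι) :
    ∑ j, indexWeight (insert j S) ≤ (S.card + 1) * indexWeight S := by
  have sum_mem : ∑ j ∈ S, indexWeight (insert j S) = S.card * indexWeight S := by
    rw [Finset.sum_congr rfl fun j hj => by rw [Finset.insert_eq_of_mem hj],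
      Finset.sum_const, nsmul_eq_mul]
  have sum_compl : ∑ j ∈ Sᶜ, indexWeight (insert j S) ≤ indexWeight S := by
    calc ∑ j ∈ Sᶜ, indexWeight (insert j S)
        = Sᶜ.card * (indexWeight S / Fintype.card ι) := by
          rw [Finset.sum_congr rfl fun j hj =>
            indexWeight_insert_of_notMem (Finset.mem_compl.mp hj), Finset.sum_const, nsmul_eq_mul]
      _ = Sᶜ.card / Fintype.card ι * indexWeight S := by ring
      _ ≤ indexWeight S :=
          mul_le_of_le_one_left (indexWeight_nonneg S) <|
            div_le_one_of_le₀ (Nat.cast_le.mpr (Finset.card_le_univ _)) (Nat.cast_nonneg _)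
  rw [← Finset.sum_add_sum_compl S]
  linarith

lemma mean_indexWeight_insert_le (S : Finset ι) (i : ι) :
    (∑ j, indexWeight (insert j S)) / Fintype.card ι ≤
      (S.card + 1) * indexWeight (insert i S) := by
  calc (∑ j, indexWeight (insert j S)) / Fintype.card ι
      ≤ (S.card + 1) * indexWeight S / Fintype.card ι := by
        gcongr
        exact sum_indexWeight_insert_le S
    _ = (S.card + 1) * (indexWeight S / Fintype.card ι) := mul_div_assoc _ _ _
    _ ≤ (S.card + 1) * indexWeight (insert i S) := by
        gcongr
        exact indexWeight_div_card_le_insert S i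

end IndexWeight

namespace CoerciveWith

variable {ι : Type*} [Fintype ι] {c K : ℝ} {M : Matrix ι ι ℝ}

lemma transpose (hM : CoerciveWith c M) : CoerciveWith c Mᵀ := fun ξ =>
  calc c * ∑ i, ξ i ^ 2 ≤ M *ᵥ ξ ⬝ᵥ ξ := hM ξ
    _ = Mᵀ *ᵥ ξ ⬝ᵥ ξ := by rw [dotProduct_comm, dotProduct_mulVec, mulVec_transpose]

lemma le_diag (hM : CoerciveWith c M) (i : ι) : c ≤ M i i := by
  classical
  simpa [Pi.single_apply, ite_pow] using hM (Pi.single i 1)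

lemma mulVec_injective (hc : 0 < c) (hM : CoerciveWith c M) : Function.Injective M.mulVec := by
  refine (injective_iff_map_eq_zero M.mulVecLin).mpr fun ξ hξ => ?_
  replace hξ : M *ᵥ ξ = 0 := hξ
  have energy : c * ∑ i, ξ i ^ 2 ≤ 0 := by simpa [hξ] using hM ξ
  have sum_sq : ∑ i, ξ i ^ 2 = 0 :=
    (nonpos_of_mul_nonpos_right energy hc).antisymm (Finset.sum_nonneg fun i _ => sq_nonneg _)
  rw [Finset.sum_eq_zero_iff_of_nonneg fun i _ => sq_nonneg _] at sum_sq
  exact funext fun i => pow_eq_zero_iff two_ne_zero |>.mp (sum_sq i (Finset.mem_univ i))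

lemma mulVec_surjective (hc : 0 < c) (hM : CoerciveWith c M) : Function.Surjective M.mulVec := by
  classical
  exact mulVec_surjective_iff_isUnit.mpr (mulVec_injective_iff_isUnit.mp (hM.mulVec_injective hc))

lemma mul_abs_le_abs_mulVec_add {κ : ℝ} (hκ : 0 ≤ κ) (hM : CoerciveWith c M)
    (hoff : ∀ i j, i ≠ j → |M i j| ≤ κ) (y : ι → ℝ) (i : ι) :
    c * |y i| ≤ |(M *ᵥ y) i| + κ * ∑ j, |y j| := by
  classical
  have row : M i i * y i = (M *ᵥ y) i - ∑ j ∈ Finset.univ.erase i, M i j * y j :=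
    eq_sub_of_add_eq (Finset.add_sum_erase _ (fun j => M i j * y j) (Finset.mem_univ i))
  have off_diag : |∑ j ∈ Finset.univ.erase i, M i j * y j| ≤ κ * ∑ j, |y j| := by
    calc |∑ j ∈ Finset.univ.erase i, M i j * y j|
        ≤ ∑ j ∈ Finset.univ.erase i, |M i j * y j| := Finset.abs_sum_le_sum_abs _ _
      _ ≤ ∑ j ∈ Finset.univ.erase i, κ * |y j| := by
          refine Finset.sum_le_sum fun j hj => ?_
          rw [abs_mul]
          gcongr
          exact hoff i j (Finset.ne_of_mem_erase hj).symm
      _ ≤ ∑ j, κ * |y j| :=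
          Finset.sum_le_sum_of_subset_of_nonneg (Finset.erase_subset _ _)
            fun j _ _ => mul_nonneg hκ (abs_nonneg _)
      _ = κ * ∑ j, |y j| := (Finset.mul_sum _ _ _).symm
  calc c * |y i| ≤ |M i i| * |y i| := by
        gcongr
        exact (hM.le_diag i).trans (le_abs_self _)
    _ = |(M *ᵥ y) i - ∑ j ∈ Finset.univ.erase i, M i j * y j| := by rw [← abs_mul, row]
    _ ≤ |(M *ᵥ y) i| + |∑ j ∈ Finset.univ.erase i, M i j * y j| := abs_sub _ _
    _ ≤ |(M *ᵥ y) i| + κ * ∑ j, |y j| := by gcongr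

lemma mul_sum_abs_le_card_mul_norm_mulVec (hc : 0 < c) (hM : CoerciveWith c M) (y : ι → ℝ) :
    c * ∑ i, |y i| ≤ Fintype.card ι * ‖M *ᵥ y‖ := by
  have cauchy_schwarz : (∑ i, |y i|) ^ 2 ≤ Fintype.card ι * ∑ i, y i ^ 2 := by
    simpa only [sq_abs, Finset.card_univ] using
      sq_sum_le_card_mul_sum_sq (s := Finset.univ) (f := fun i => |y i|)
  have energy : c * ∑ i, y i ^ 2 ≤ ‖M *ᵥ y‖ * ∑ i, |y i| := by
    calc c * ∑ i, y i ^ 2 ≤ ∑ i, (M *ᵥ y) i * y i := hM y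
      _ ≤ ∑ i, ‖M *ᵥ y‖ * |y i| := by
          refine Finset.sum_le_sum fun i _ => (le_abs_self _).trans ?_
          rw [abs_mul]
          gcongr
          exact norm_le_pi_norm (M *ᵥ y) i
      _ = ‖M *ᵥ y‖ * ∑ i, |y i| := (Finset.mul_sum _ _ _).symm
  have sum_nonneg : 0 ≤ ∑ i, |y i| := Finset.sum_nonneg fun i _ => abs_nonneg _
  rcases sum_nonneg.eq_or_lt with sum_zero | sum_pos
  · rw [← sum_zero, mul_zero]
    positivity
  · refine le_of_mul_le_mul_right ?_ sum_pos
    calc c * (∑ i, |y i|) * ∑ i, |y i| = c * (∑ i, |y i|) ^ 2 := by ring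
      _ ≤ c * (Fintype.card ι * ∑ i, y i ^ 2) := by gcongr
      _ = Fintype.card ι * (c * ∑ i, y i ^ 2) := by ring
      _ ≤ Fintype.card ι * (‖M *ᵥ y‖ * ∑ i, |y i|) := by gcongr
      _ = Fintype.card ι * ‖M *ᵥ y‖ * ∑ i, |y i| := (mul_assoc _ _ _).symm

lemma norm_le_mul_norm_mulVec (hc : 0 < c) (hK : 0 ≤ K) (hM : CoerciveWith c M)
    (hoff : ∀ i j, i ≠ j → |M i j| ≤ K / Fintype.card ι) (y : ι → ℝ) :
    ‖y‖ ≤ (1 + K / c) / c * ‖M *ᵥ y‖ := by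
  refine (pi_norm_le_iff_of_nonneg (by positivity)).mpr fun i => ?_
  have card_pos : (0 : ℝ) < Fintype.card ι := Nat.cast_pos.mpr (Fintype.card_pos_iff.mpr ⟨i⟩)
  have sum_le : ∑ j, |y j| ≤ Fintype.card ι * ‖M *ᵥ y‖ / c := by
    rw [le_div_iff₀' hc]
    exact hM.mul_sum_abs_le_card_mul_norm_mulVec hc y
  rw [div_mul_eq_mul_div, le_div_iff₀' hc, Real.norm_eq_abs]
  calc c * |y i| ≤ |(M *ᵥ y) i| + K / Fintype.card ι * ∑ j, |y j| :=
        hM.mul_abs_le_abs_mulVec_add (by positivity) hoff y i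
    _ ≤ ‖M *ᵥ y‖ + K / Fintype.card ι * (Fintype.card ι * ‖M *ᵥ y‖ / c) := by
        gcongr
        exact norm_le_pi_norm (M *ᵥ y) i
    _ = (1 + K / c) * ‖M *ᵥ y‖ := by field_simp

lemma sum_abs_le_mul_sum_abs_mulVec (hc : 0 < c) (hK : 0 ≤ K) (hM : CoerciveWith c M)
    (hoff : ∀ i j, i ≠ j → |M i j| ≤ K / Fintype.card ι) (y : ι → ℝ) :
    ∑ i, |y i| ≤ (1 + K / c) / c * ∑ i, |(M *ᵥ y) i| := by
  obtain ⟨x, hx⟩ := hM.transpose.mulVec_surjective hc fun i => (SignType.sign (y i) : ℝ)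
  have norm_x : ‖x‖ ≤ (1 + K / c) / c := by
    have norm_sign : ‖Mᵀ *ᵥ x‖ ≤ 1 := by
      refine (pi_norm_le_iff_of_nonneg zero_le_one).mpr fun i => ?_
      rw [hx]
      rcases lt_trichotomy (y i) 0 with neg | zero | pos <;> simp [*]
    exact (hM.transpose.norm_le_mul_norm_mulVec hc hK (fun i j hij => hoff j i hij.symm) x).trans
      (mul_le_of_le_one_right (by positivity) norm_sign)
  calc ∑ i, |y i| = y ⬝ᵥ Mᵀ *ᵥ x := by
        rw [hx]
        exact Finset.sum_congr rfl fun i _ => (self_mul_sign _).symm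
    _ = x ⬝ᵥ M *ᵥ y := by rw [dotProduct_mulVec, vecMul_transpose, dotProduct_comm]
    _ ≤ ∑ i, (1 + K / c) / c * |(M *ᵥ y) i| := by
        refine Finset.sum_le_sum fun i _ => (le_abs_self _).trans ?_
        rw [abs_mul]
        gcongr
        exact (norm_le_pi_norm x i).trans norm_x
    _ = (1 + K / c) / c * ∑ i, |(M *ᵥ y) i| := (Finset.mul_sum _ _ _).symm

lemma abs_le_abs_mulVec_add_mean (hc : 0 < c) (hK : 0 ≤ K) (hM : CoerciveWith c M)
    (hoff : ∀ i j, i ≠ j → |M i j| ≤ K / Fintype.card ι) (y : ι → ℝ) (i : ι) :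
    |y i| ≤ (|(M *ᵥ y) i| +
      K * ((1 + K / c) / c) * ((∑ j, |(M *ᵥ y) j|) / Fintype.card ι)) / c := by
  rw [le_div_iff₀' hc]
  calc c * |y i| ≤ |(M *ᵥ y) i| + K / Fintype.card ι * ∑ j, |y j| :=
        hM.mul_abs_le_abs_mulVec_add (by positivity) hoff y i
    _ ≤ |(M *ᵥ y) i| + K / Fintype.card ι * ((1 + K / c) / c * ∑ j, |(M *ᵥ y) j|) := by
        gcongr
        exact hM.sum_abs_le_mul_sum_abs_mulVec hc hK hoff y
    _ = |(M *ᵥ y) i| + K * ((1 + K / c) / c) * ((∑ j, |(M *ᵥ y) j|) / Fintype.card ι) := by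
        ring

end CoerciveWith

theorem coercive_system_weighted_decay_general {ι : Type*} [Fintype ι] {c K : ℝ} (hc : 0 < c)
    (hK : 0 ≤ K) {M : Matrix ι ι ℝ} (hM : CoerciveWith c M)
    (hoff : ∀ i j, i ≠ j → |M i j| ≤ K / Fintype.card ι)
    {w : ι → ℝ} {L : ℝ} (hw : ∀ i, (∑ j, w j) / Fintype.card ι ≤ L * w i)
    {τ : ℝ} (hτ : 0 ≤ τ) {y t : ι → ℝ} (hy : M *ᵥ y = t) (ht : ∀ i, |t i| ≤ τ * w i) (i : ι) :
    |y i| ≤ (1 + K * ((1 + K / c) / c) * L) / c * τ * w i := by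
  have mean_le : (∑ j, |t j|) / Fintype.card ι ≤ τ * (L * w i) := by
    calc (∑ j, |t j|) / Fintype.card ι ≤ (∑ j, τ * w j) / Fintype.card ι := by
          gcongr with j
          exact ht j
      _ = τ * ((∑ j, w j) / Fintype.card ι) := by rw [← Finset.mul_sum, mul_div_assoc]
      _ ≤ τ * (L * w i) := by
          gcongr
          exact hw i
  calc |y i| ≤ (|t i| + K * ((1 + K / c) / c) * ((∑ j, |t j|) / Fintype.card ι)) / c :=
        hy ▸ hM.abs_le_abs_mulVec_add_mean hc hK hoff y i
    _ ≤ (τ * w i + K * ((1 + K / c) / c) * (τ * (L * w i))) / c := by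
        gcongr
        exact ht i
    _ = (1 + K * ((1 + K / c) / c) * L) / c * τ * w i := by ring

/-- weighted decay of solutions to coercive linear systems with O(1/N)
off-diagonal coupling: if `M y = t` with `|t i| ≤ τ · N^{1 - |S ∪ {i}|}`, then
`|y i| ≤ C · τ · N^{1 - |S ∪ {i}|}`, with `C` depending only on `c`, `K`, `s`. -/
theorem coercive_system_weighted_decay (c K : ℝ) (hc : 0 < c) (hK : 0 < K)
    (s : ℕ) (hs : 0 < s) :
    ∃ C : ℝ, ∀ (N : ℕ), 0 < N → ∀ M : Matrix (Fin N) (Fin N) ℝ,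
      (∀ ξ : Fin N → ℝ, c * ∑ i, ξ i ^ 2 ≤ ∑ i, M.mulVec ξ i * ξ i) →
      (∀ i j, i ≠ j → |M i j| ≤ K / N) →
      ∀ S : Finset (Fin N), S.Nonempty → S.card ≤ s →
      ∀ τ : ℝ, 0 ≤ τ →
      ∀ y t : Fin N → ℝ, M.mulVec y = t →
      (∀ i, |t i| ≤ τ * (N : ℝ) ^ ((1 : ℤ) - ((insert i S).card : ℤ))) →
      ∀ i, |y i| ≤ C * τ * (N : ℝ) ^ ((1 : ℤ) - ((insert i S).card : ℤ)) := by
  refine ⟨(1 + K * ((1 + K / c) / c) * (s + 1)) / c, ?_⟩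
  intro N _ M hM hoff S _ hS τ hτ y t hy ht
  have hw (i : Fin N) : (∑ j, indexWeight (insert j S)) / Fintype.card (Fin N) ≤
      (s + 1) * indexWeight (insert i S) :=
    (mean_indexWeight_insert_le S i).trans <| by
      gcongr
      exact indexWeight_nonneg _
  simpa only [indexWeight, Fintype.card_fin] using
    coercive_system_weighted_decay_general hc hK.le hM (by simpa only [Fintype.card_fin] using hoff)
      hw hτ hy (by simpa only [indexWeight, Fintype.card_fin] using ht)
end

section
/- Let n, m be positive integers, let c > 0, and let k ∈ ℕ ∪ {∞} with k ≥ 1. Let F : ℝ^n × ℝ^m → ℝ^m be of class C^k and uniformly strongly monotone in its second variable, i.e. ⟨F(x,a) − F(x,b), a − b⟩ ≥ c‖a − b‖² for all x ∈ ℝ^n and all a, b ∈ ℝ^m. Then there is exactly one map φ : ℝ^n × ℝ^m → ℝ^m such that F(x, φ(x,p)) = p for all (x,p) ∈ ℝ^n × ℝ^m; moreover φ is of class C^k, and for each fixed x the map p ↦ φ(x,p) is Lipschitz with constant 1/c. -/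
open scoped RealInnerProductSpace

/-!
Differentiating the monotonicity inequality shows that the partial derivative `∂F/∂a` inherits it,
so Lax–Milgram makes it invertible. For fixed `x` the map `F(x, ·)` then has open range by the
inverse function theorem and closed range by its antilipschitz bound, hence is bijective. Since
solutions are globally unique, `φ` coincides near each point with the local implicit function of
`F(x, a) - p = 0`, and this gives its smoothness without knowing beforehand that `φ` is continuous.
-/

open Filter Function Set
open scoped Topology

theorem isClosed_range_of_antilipschitzWith {α β : Type*} [PseudoEMetricSpace α] [CompleteSpace α]
    [EMetricSpace β] {K : NNReal} {f : α → β} (hf : AntilipschitzWith K f) (hcont : Continuous f) :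
    IsClosed (range f) := by
  refine isClosed_of_closure_subset fun y hy => ?_
  have : (comap f (𝓝 y)).NeBot :=
    comap_neBot_iff_frequently.2 (mem_closure_iff_frequently.1 hy)
  have hcauchy : Cauchy (comap f (𝓝 y)) := cauchy_nhds.comap hf.comap_uniformity_le
  obtain ⟨a, ha⟩ := CompleteSpace.complete hcauchy
  exact ⟨a, tendsto_nhds_unique ((hcont.tendsto a).mono_left ha) tendsto_comap⟩

theorem contDiffAt_of_unique_solution {𝕜 E₁ E₂ G : Type*} [RCLike 𝕜]
    [NormedAddCommGroup E₁] [NormedSpace 𝕜 E₁] [CompleteSpace E₁]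
    [NormedAddCommGroup E₂] [NormedSpace 𝕜 E₂] [CompleteSpace E₂]
    [NormedAddCommGroup G] [NormedSpace 𝕜 G] [CompleteSpace G]
    {n : WithTop ℕ∞} (hn : n ≠ 0) {f : E₁ × E₂ → G} {g : E₁ → E₂} {x₀ : E₁}
    (hf : ContDiffAt 𝕜 n f (x₀, g x₀))
    (hf₂ : (fderiv 𝕜 f (x₀, g x₀) ∘L .inr 𝕜 E₁ E₂).IsInvertible)
    (hg : ∀ᶠ x in 𝓝 x₀, ∀ y, f (x, y) = f (x₀, g x₀) → y = g x) :
    ContDiffAt 𝕜 n g x₀ := by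
  refine (hf.contDiffAt_implicitFunction hn hf₂).congr_of_eventuallyEq ?_
  filter_upwards [hg, hf.eventually_apply_implicitFunction hn hf₂] with x hx hsol
  exact (hx _ hsol).symm

/-- `f` is strongly monotone with modulus `c`. The sign of `c` is left free, so that `c = 0` is
ordinary monotonicity. -/
def IsStronglyMonotone {V : Type*} [NormedAddCommGroup V] [InnerProductSpace ℝ V]
    (c : ℝ) (f : V → V) : Prop :=
  ∀ a b, c * ‖a - b‖ ^ 2 ≤ ⟪f a - f b, a - b⟫

namespace IsStronglyMonotone

variable {V : Type*} [NormedAddCommGroup V] [InnerProductSpace ℝ V] {c : ℝ} {f : V → V}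

theorem sub_const (hf : IsStronglyMonotone c f) (p : V) :
    IsStronglyMonotone c fun a => f a - p := fun a b => by
  simpa only [sub_sub_sub_cancel_right] using hf a b

theorem mul_norm_sub_le_norm_sub (hf : IsStronglyMonotone c f) (a b : V) :
    c * ‖a - b‖ ≤ ‖f a - f b‖ := by
  rcases (norm_nonneg (a - b)).eq_or_lt with h | h
  · simp [← h]
  · refine le_of_mul_le_mul_right ?_ h
    calc c * ‖a - b‖ * ‖a - b‖ = c * ‖a - b‖ ^ 2 := by ring
      _ ≤ ⟪f a - f b, a - b⟫ := hf a b
      _ ≤ ‖f a - f b‖ * ‖a - b‖ := real_inner_le_norm _ _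

theorem antilipschitzWith (hf : IsStronglyMonotone c f) (hc : 0 < c) :
    AntilipschitzWith (1 / c).toNNReal f := by
  refine AntilipschitzWith.of_le_mul_dist fun a b => ?_
  rw [Real.coe_toNNReal _ (by positivity), dist_eq_norm, dist_eq_norm, one_div,
    le_inv_mul_iff₀ hc]
  exact hf.mul_norm_sub_le_norm_sub a b

theorem of_hasFDerivAt (hf : IsStronglyMonotone c f) {f' : V →L[ℝ] V} {a : V}
    (hf' : HasFDerivAt f f' a) : IsStronglyMonotone c f' := by
  intro u w
  rw [← map_sub]
  set v := u - w
  have hlim : Tendsto (fun t : ℝ => ⟪t⁻¹ • (f (a + t • v) - f a), v⟫) (𝓝[≠] 0) (𝓝 ⟪f' v, v⟫) :=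
    (hf'.hasLineDerivAt v).tendsto_slope_zero.inner tendsto_const_nhds
  refine ge_of_tendsto hlim ?_
  filter_upwards [self_mem_nhdsWithin] with t (ht : t ≠ 0)
  have hquot : ⟪t⁻¹ • (f (a + t • v) - f a), v⟫ = ⟪f (a + t • v) - f a, t • v⟫ / t ^ 2 := by
    rw [real_inner_smul_left, real_inner_smul_right]
    field_simp
  rw [hquot, le_div_iff₀ (by positivity)]
  calc c * ‖v‖ ^ 2 * t ^ 2 = c * ‖a + t • v - a‖ ^ 2 := by
        rw [add_sub_cancel_left, norm_smul, mul_pow, Real.norm_eq_abs, sq_abs]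
        ring
    _ ≤ ⟪f (a + t • v) - f a, a + t • v - a⟫ := hf _ _
    _ = ⟪f (a + t • v) - f a, t • v⟫ := by rw [add_sub_cancel_left]

variable [CompleteSpace V]

theorem isInvertible {L : V →L[ℝ] V} (hL : IsStronglyMonotone c L) (hc : 0 < c) :
    L.IsInvertible := by
  have hcoercive : IsCoercive ((innerSL ℝ).comp L : V →L[ℝ] V →L[ℝ] ℝ) :=
    ⟨c, hc, fun v => by simpa [pow_two, mul_assoc] using hL v 0⟩
  refine ⟨hcoercive.continuousLinearEquivOfBilin, ContinuousLinearMap.ext fun v => ?_⟩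
  exact (hcoercive.unique_continuousLinearEquivOfBilin fun _ => rfl).symm

theorem isOpenMap (hf : IsStronglyMonotone c f) (hc : 0 < c) (hf₁ : ContDiff ℝ 1 f) :
    IsOpenMap f := by
  have hderiv (a : V) : HasStrictFDerivAt f (fderiv ℝ f a) a :=
    hf₁.contDiffAt.hasStrictFDerivAt one_ne_zero
  choose e he using fun a => (hf.of_hasFDerivAt (hderiv a).hasFDerivAt).isInvertible hc
  exact isOpenMap_of_hasStrictFDerivAt_equiv fun a => (he a).symm ▸ hderiv a

theorem surjective (hf : IsStronglyMonotone c f) (hc : 0 < c) (hf₁ : ContDiff ℝ 1 f) :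
    Surjective f := by
  have hclosed : IsClosed (range f) :=
    isClosed_range_of_antilipschitzWith (hf.antilipschitzWith hc) hf₁.continuous
  have hopen : IsOpen (range f) := (hf.isOpenMap hc hf₁).isOpen_range
  exact range_eq_univ.1 (IsClopen.eq_univ ⟨hclosed, hopen⟩ (range_nonempty f))

end IsStronglyMonotone

section ImplicitFunction

variable {E V : Type*} [NormedAddCommGroup E] [NormedSpace ℝ E]
  [NormedAddCommGroup V] [InnerProductSpace ℝ V] [CompleteSpace V]

theorem isInvertible_fderiv_comp_inr_of_isStronglyMonotone {c : ℝ} (hc : 0 < c) {f : E × V → V}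
    {z : E × V} (hf : DifferentiableAt ℝ f z)
    (hmono : IsStronglyMonotone c fun a => f (z.1, a)) :
    (fderiv ℝ f z ∘L .inr ℝ E V).IsInvertible := by
  have hpartial : HasFDerivAt (fun a => f (z.1, a)) (fderiv ℝ f z ∘L .inr ℝ E V) z.2 :=
    hf.hasFDerivAt.comp z.2 (hasFDerivAt_prodMk_right z.1 z.2)
  exact (hmono.of_hasFDerivAt hpartial).isInvertible hc

variable [CompleteSpace E] {c : E → ℝ} {k : WithTop ℕ∞} {F : E × V → V}

theorem contDiff_of_isStronglyMonotone (hc : ∀ x, 0 < c x) (hk : k ≠ 0) (hF : ContDiff ℝ k F)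
    (hmono : ∀ x, IsStronglyMonotone (c x) fun a => F (x, a)) {φ : E × V → V}
    (hφ : ∀ x p, F (x, φ (x, p)) = p) : ContDiff ℝ k φ := by
  rw [contDiff_iff_contDiffAt]
  intro z
  let f : (E × V) × V → V := fun w => F (w.1.1, w.2) - w.1.2
  have hf : ContDiff ℝ k f := by fun_prop
  have hf_root : f (z, φ z) = 0 := sub_eq_zero.2 (hφ z.1 z.2)
  refine contDiffAt_of_unique_solution hk hf.contDiffAt ?_ (.of_forall fun y a hy => ?_)
  · exact isInvertible_fderiv_comp_inr_of_isStronglyMonotone (hc z.1)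
      (hf.differentiable hk _) ((hmono z.1).sub_const z.2)
  · have hFa : F (y.1, a) = y.2 := sub_eq_zero.1 (hy.trans hf_root)
    exact ((hmono y.1).antilipschitzWith (hc y.1)).injective (hFa.trans (hφ y.1 y.2).symm)

theorem global_implicit_function_monotone_general (hc : ∀ x, 0 < c x) (hk : k ≠ 0)
    (hF : ContDiff ℝ k F) (hmono : ∀ x, IsStronglyMonotone (c x) fun a => F (x, a)) :
    (∃! φ : E × V → V, ∀ x p, F (x, φ (x, p)) = p) ∧
    (∀ φ : E × V → V, (∀ x p, F (x, φ (x, p)) = p) →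
      ContDiff ℝ k φ ∧ ∀ x p q, ‖φ (x, p) - φ (x, q)‖ ≤ (1 / c x) * ‖p - q‖) := by
  have hanti (x : E) := (hmono x).antilipschitzWith (hc x)
  have hF₁ : ContDiff ℝ 1 F := hF.of_le (ENat.one_le_iff_ne_zero_withTop.2 hk)
  have hsurj (x : E) : Surjective fun a => F (x, a) :=
    (hmono x).surjective (hc x) (hF₁.comp (contDiff_prodMk_right x))
  refine ⟨?_, fun φ hφ => ⟨contDiff_of_isStronglyMonotone hc hk hF hmono hφ, fun x p q => ?_⟩⟩
  · choose g hg using hsurj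
    exact ⟨fun z => g z.1 z.2, hg, fun ψ hψ => funext fun z =>
      (hanti z.1).injective ((hψ z.1 z.2).trans (hg z.1 z.2).symm)⟩
  · have hlip : LipschitzWith (1 / c x).toNNReal fun p => φ (x, p) :=
      (hanti x).to_rightInverse (hφ x)
    have := hlip.norm_sub_le p q
    rwa [Real.coe_toNNReal _ (one_div_pos.2 (hc x)).le] at this

end ImplicitFunction

/-- global implicit function theorem for uniformly monotone systems:
if `F : ℝⁿ × ℝᵐ → ℝᵐ` is `C^k` (`k ≥ 1`) and uniformly strongly monotone in its
second variable, then there is exactly one map `φ` with `F(x, φ(x,p)) = p` for all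
`(x,p)`; moreover `φ` is `C^k` and `p ↦ φ(x,p)` is Lipschitz with constant `1/c`. -/
theorem global_implicit_function_monotone (n m : ℕ) (hn : 0 < n) (hm : 0 < m)
    (c : ℝ) (hc : 0 < c) (k : ℕ∞) (hk : 1 ≤ k)
    (F : EuclideanSpace ℝ (Fin n) × EuclideanSpace ℝ (Fin m) → EuclideanSpace ℝ (Fin m))
    (hF : ContDiff ℝ k F)
    (hmono : ∀ (x : EuclideanSpace ℝ (Fin n)) (a b : EuclideanSpace ℝ (Fin m)),
      c * ‖a - b‖ ^ 2 ≤ ⟪F (x, a) - F (x, b), a - b⟫) :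
    (∃! φ : EuclideanSpace ℝ (Fin n) × EuclideanSpace ℝ (Fin m) → EuclideanSpace ℝ (Fin m),
        ∀ x p, F (x, φ (x, p)) = p) ∧
    (∀ φ : EuclideanSpace ℝ (Fin n) × EuclideanSpace ℝ (Fin m) → EuclideanSpace ℝ (Fin m),
        (∀ x p, F (x, φ (x, p)) = p) →
        ContDiff ℝ k φ ∧ ∀ x p q, ‖φ (x, p) - φ (x, q)‖ ≤ (1 / c) * ‖p - q‖) :=
  global_implicit_function_monotone_general (fun _ => hc)
    (ENat.one_le_iff_ne_zero_withTop.1 (mod_cast hk)) hF hmono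
end
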